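/- arXiv:1510.03267 — 3 statements merged into one kernel-verified Lean document; each statement's English description precedes it below -/
import Mathlib

section
/- Let P be a Borel probability measure on X×Y with marginal P_X on X, and let L be a locally separately Lipschitz continuous pairwise loss function. Then for every B ≥ 0 and all bounded measurable functions f, g : X → ℝ with sup-norms ‖f‖_∞ ≤ B and ‖g‖_∞ ≤ B, one has |R_{L,P}(f) − R_{L,P}(g)| ≤ 2·|L|_{B,1} · ‖f − g‖_{L¹(P_X)}. -/
open MeasureTheory

/-!
The Lipschitz condition bounds the difference of the two integrands at a pair of observations by
`C * (d(z) + d(z'))`, where `d` is the distance between the two predictions at one observation.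
Under a product measure each of the two summands contributes the same integral of `d`, which only
depends on the marginal on the input space; this is where the factor `2` comes from.
-/

section Integral

variable {α β E : Type*} [MeasurableSpace α] [MeasurableSpace β]
  [NormedAddCommGroup E] [NormedSpace ℝ E]

theorem norm_integral_sub_integral_le_of_norm_sub_le {μ : Measure α} {F G : α → E} {b : α → ℝ}
    (hFG : AEStronglyMeasurable (F - G) μ) (hb : Integrable b μ)
    (hbound : ∀ᵐ a ∂μ, ‖F a - G a‖ ≤ b a) :
    ‖∫ a, F a ∂μ - ∫ a, G a ∂μ‖ ≤ ∫ a, b a ∂μ := by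
  have hdiff : Integrable (F - G) μ := hb.mono' hFG hbound
  by_cases hG : Integrable G μ
  · have hF : Integrable F μ := by simpa using hdiff.add hG
    rw [← integral_sub hF hG]
    exact norm_integral_le_of_norm_le hb hbound
  · -- Neither function is integrable, so both integrals take the junk value `0`.
    have hF : ¬ Integrable F μ := fun hF => hG (by simpa using hF.sub hdiff)
    rw [integral_undef hF, integral_undef hG, sub_zero, norm_zero]
    exact integral_nonneg_of_ae (hbound.mono fun _ h => (norm_nonneg _).trans h)

theorem integral_comp_fst_add_comp_snd {μ : Measure α} {ν : Measure β} [IsFiniteMeasure μ]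
    [IsFiniteMeasure ν] {u : α → E} {v : β → E} (hu : Integrable u μ) (hv : Integrable v ν) :
    ∫ z, (u z.1 + v z.2) ∂(μ.prod ν) =
      ν.real Set.univ • ∫ a, u a ∂μ + μ.real Set.univ • ∫ b, v b ∂ν := by
  rw [integral_add (hu.comp_fst ν) (hv.comp_snd μ), integral_fun_fst, integral_fun_snd]

end Integral

section PairwiseRisk

variable {X Y M : Type*}

/-- Separate Lipschitz continuity of a pairwise loss on a set `S` of predictions, uniformly in the
observations. The constant `|L|_{b,1}` is the least such `C ≥ 0` for `S = [-b, b]`. -/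
def SeparatelyLipschitzOn [PseudoMetricSpace M] (L : X → Y → X → Y → M → M → ℝ) (C : ℝ)
    (S : Set M) : Prop :=
  ∀ t₁ ∈ S, ∀ t₂ ∈ S, ∀ s₁ ∈ S, ∀ s₂ ∈ S, ∀ x y x' y',
    |L x y x' y' t₁ t₂ - L x y x' y' s₁ s₂| ≤ C * (dist t₁ s₁ + dist t₂ s₂)

variable [MeasurableSpace X] [MeasurableSpace Y]

/-- The `L`-risk `R_{L,P}(f)` of a predictor `f` for a pairwise loss `L`, with predictions in an
arbitrary type `M`. It is a Bochner integral, hence `0` when the loss of `f` is not integrable. -/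
noncomputable def pairwiseRisk (L : X → Y → X → Y → M → M → ℝ) (P : Measure (X × Y))
    (f : X → M) : ℝ :=
  ∫ z : (X × Y) × (X × Y), L z.1.1 z.1.2 z.2.1 z.2.2 (f z.1.1) (f z.2.1) ∂(P.prod P)

theorem measurable_pairwiseLoss_comp [MeasurableSpace M] {L : X → Y → X → Y → M → M → ℝ}
    (hL : Measurable fun p : (X × Y) × (X × Y) × M × M =>
      L p.1.1 p.1.2 p.2.1.1 p.2.1.2 p.2.2.1 p.2.2.2)
    {f : X → M} (hf : Measurable f) :
    Measurable fun z : (X × Y) × (X × Y) => L z.1.1 z.1.2 z.2.1 z.2.2 (f z.1.1) (f z.2.1) :=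
  hL.comp (show Measurable fun z : (X × Y) × (X × Y) => (z.1, z.2, f z.1.1, f z.2.1) by fun_prop)

theorem pairwise_risk_lipschitz_general [MeasurableSpace M] [PseudoMetricSpace M]
    {L : X → Y → X → Y → M → M → ℝ}
    (hL : Measurable fun p : (X × Y) × (X × Y) × M × M =>
      L p.1.1 p.1.2 p.2.1.1 p.2.1.2 p.2.2.1 p.2.2.2)
    {C : ℝ} {S : Set M} (hLip : SeparatelyLipschitzOn L C S)
    {P : Measure (X × Y)} [IsFiniteMeasure P] {f g : X → M} (hf : Measurable f) (hg : Measurable g)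
    (hfS : ∀ x, f x ∈ S) (hgS : ∀ x, g x ∈ S)
    (hfg : Integrable (fun x => dist (f x) (g x)) (P.map Prod.fst)) :
    |pairwiseRisk L P f - pairwiseRisk L P g| ≤
      2 * C * P.real Set.univ * ∫ x, dist (f x) (g x) ∂(P.map Prod.fst) := by
  have hd : Integrable (fun z : X × Y => dist (f z.1) (g z.1)) P :=
    hfg.comp_measurable measurable_fst
  calc |pairwiseRisk L P f - pairwiseRisk L P g|
      ≤ ∫ z : (X × Y) × (X × Y),
          C * (dist (f z.1.1) (g z.1.1) + dist (f z.2.1) (g z.2.1)) ∂(P.prod P) :=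
        norm_integral_sub_integral_le_of_norm_sub_le
          ((measurable_pairwiseLoss_comp hL hf).sub
            (measurable_pairwiseLoss_comp hL hg)).aestronglyMeasurable
          (((hd.comp_fst P).add (hd.comp_snd P)).const_mul C)
          (.of_forall fun z => hLip _ (hfS _) _ (hfS _) _ (hgS _) _ (hgS _) _ _ _ _)
    _ = 2 * C * P.real Set.univ * ∫ z, dist (f z.1) (g z.1) ∂P := by
        rw [integral_const_mul, integral_comp_fst_add_comp_snd hd hd, smul_eq_mul]
        ring
    _ = 2 * C * P.real Set.univ * ∫ x, dist (f x) (g x) ∂(P.map Prod.fst) := by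
        rw [integral_map measurable_fst.aemeasurable hfg.aestronglyMeasurable]

end PairwiseRisk

/-- **Lipschitz continuity of risks.** If `L` is a locally separately Lipschitz continuous
pairwise loss (with local Lipschitz constants `c b` on `[-b,b]`), then for all measurable
`f, g` bounded by `B` one has `|R_{L,P}(f) - R_{L,P}(g)| ≤ 2 ⬝ c B ⬝ ‖f - g‖_{L¹(P_X)}`. -/
theorem pairwise_risk_lipschitz
    {X : Type*} [MeasurableSpace X] {Y : Set ℝ} (hY : IsClosed Y)
    (L : X → Y → X → Y → ℝ → ℝ → ℝ)
    (hL_nonneg : ∀ x y x' y' t t', 0 ≤ L x y x' y' t t')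
    (hL_meas : Measurable fun p : (X × Y) × (X × Y) × ℝ × ℝ =>
      L p.1.1 p.1.2 p.2.1.1 p.2.1.2 p.2.2.1 p.2.2.2)
    (c : ℝ → ℝ)
    (hc_nonneg : ∀ b, 0 ≤ b → 0 ≤ c b)
    (hLip : ∀ b, 0 ≤ b → ∀ t₁ t₂ s₁ s₂ : ℝ, |t₁| ≤ b → |t₂| ≤ b → |s₁| ≤ b → |s₂| ≤ b →
      ∀ x y x' y',
        |L x y x' y' t₁ t₂ - L x y x' y' s₁ s₂| ≤ c b * (|t₁ - s₁| + |t₂ - s₂|))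
    (P : Measure (X × Y)) [IsProbabilityMeasure P]
    (B : ℝ) (hB : 0 ≤ B)
    (f g : X → ℝ) (hf : Measurable f) (hg : Measurable g)
    (hfB : ∀ x, |f x| ≤ B) (hgB : ∀ x, |g x| ≤ B) :
    |(∫ z : (X × Y) × (X × Y), L z.1.1 z.1.2 z.2.1 z.2.2 (f z.1.1) (f z.2.1) ∂(P.prod P))
      - ∫ z : (X × Y) × (X × Y), L z.1.1 z.1.2 z.2.1 z.2.2 (g z.1.1) (g z.2.1) ∂(P.prod P)|
      ≤ 2 * c B * ∫ x, |f x - g x| ∂(P.map Prod.fst) := by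
  have hLipB : SeparatelyLipschitzOn L (c B) {t | |t| ≤ B} :=
    fun t₁ ht₁ t₂ ht₂ s₁ hs₁ s₂ hs₂ => hLip B hB t₁ t₂ s₁ s₂ ht₁ ht₂ hs₁ hs₂
  have hf_int : Integrable f (P.map Prod.fst) :=
    .of_bound hf.aestronglyMeasurable B (.of_forall hfB)
  have hg_int : Integrable g (P.map Prod.fst) :=
    .of_bound hg.aestronglyMeasurable B (.of_forall hgB)
  simpa only [pairwiseRisk, Real.dist_eq, probReal_univ, mul_one] using
    pairwise_risk_lipschitz_general hL_meas hLipB hf hg hfB hgB (hf_int.sub hg_int).abs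
end

section
/- Let L be a convex and separately Lipschitz continuous pairwise loss function, H the RKHS of a bounded measurable kernel k over X, and P any Borel probability measure on X×Y. Then for every λ > 0 there exists a unique minimizer f_{L★,P,λ} ∈ H of the regularized shifted risk f ↦ R_{L★,P}(f) + λ‖f‖_H². (No moment condition such as R_{L,P}(0) < ∞ is required.) -/
open MeasureTheory
open scoped RealInnerProductSpace

/-- The shifted risk `R_{L★,P}(f)` of the function `x ↦ ⟪f, Φ x⟫` induced by `f ∈ H`. -/
noncomputable def shiftedRisk {X : Type*} [MeasurableSpace X] {Y : Set ℝ}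
    {H : Type*} [NormedAddCommGroup H] [InnerProductSpace ℝ H]
    (L : X → Y → X → Y → ℝ → ℝ → ℝ) (Φ : X → H)
    (P : Measure (X × Y)) (f : H) : ℝ :=
  ∫ z : (X × Y) × (X × Y),
    (L z.1.1 z.1.2 z.2.1 z.2.2 ⟪f, Φ z.1.1⟫ ⟪f, Φ z.2.1⟫
      - L z.1.1 z.1.2 z.2.1 z.2.2 0 0) ∂(P.prod P)

/-! Adding `λ‖·‖²` to a convex function makes it strongly convex, and a lower semicontinuous
strongly convex function on a complete convex set has exactly one minimizer: it is bounded below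
because its quadratic growth beats the at most linear decrease that convexity allows, and the
midpoint inequality forces minimizing sequences to be Cauchy. No moment condition is needed for the
shifted risk: the Lipschitz condition bounds `|L★(x, y, x̃, ỹ, f(x), f(x̃))|` by
`|L|₁ (‖Φ x‖ + ‖Φ x̃‖) ‖f‖`, which does not involve `L(x, y, x̃, ỹ, 0, 0)`.
-/

open Filter Set
open scoped Topology

section StrongConvexity

variable {E : Type*} [NormedAddCommGroup E] [NormedSpace ℝ E] {s : Set E} {f : E → ℝ} {m : ℝ}

theorem mul_sq_norm_sub_le_of_strongConvexOn (hf : StrongConvexOn s m f) {b : ℝ}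
    (hb : b ∈ lowerBounds (f '' s)) {x y : E} (hx : x ∈ s) (hy : y ∈ s) :
    m / 4 * ‖x - y‖ ^ 2 ≤ (f x - b) + (f y - b) := by
  have half_nonneg : (0 : ℝ) ≤ 1 / 2 := by norm_num
  have half_add_half : (1 / 2 : ℝ) + 1 / 2 = 1 := by norm_num
  have midpoint_le := hf.2 hx hy half_nonneg half_nonneg half_add_half
  have le_midpoint := hb (mem_image_of_mem f (hf.1 hx hy half_nonneg half_nonneg half_add_half))
  simp only [smul_eq_mul] at midpoint_le
  linarith

theorem cauchySeq_of_strongConvexOn (hf : StrongConvexOn s m f) (hm : 0 < m) {b : ℝ}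
    (hb : b ∈ lowerBounds (f '' s)) {u : ℕ → E} (hu : ∀ n, u n ∈ s)
    (hfu : Tendsto (fun n => f (u n)) atTop (𝓝 b)) : CauchySeq u := by
  have dist_le (n : ℕ × ℕ) :
      dist (u n.1) (u n.2) ≤ √(4 / m * ((f (u n.1) - b) + (f (u n.2) - b))) := by
    rw [dist_eq_norm]
    apply Real.le_sqrt_of_sq_le
    calc ‖u n.1 - u n.2‖ ^ 2 = 4 / m * (m / 4 * ‖u n.1 - u n.2‖ ^ 2) := by field_simp
      _ ≤ 4 / m * ((f (u n.1) - b) + (f (u n.2) - b)) := by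
        gcongr
        exact mul_sq_norm_sub_le_of_strongConvexOn hf hb (hu n.1) (hu n.2)
  have gap_tendsto : Tendsto (fun n => f (u n) - b) atTop (𝓝 0) := by
    simpa only [sub_self] using hfu.sub_const b
  have bound_tendsto :
      Tendsto (fun n : ℕ × ℕ => √(4 / m * ((f (u n.1) - b) + (f (u n.2) - b)))) atTop (𝓝 0) := by
    rw [← prod_atTop_atTop_eq]
    simpa only [add_zero, mul_zero, Real.sqrt_zero, Function.comp_apply] using
      (((gap_tendsto.comp tendsto_fst).add (gap_tendsto.comp tendsto_snd)).const_mul (4 / m)).sqrt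
  exact cauchySeq_iff_tendsto_dist_atTop_0.2
    (squeeze_zero (fun _ => dist_nonneg) dist_le bound_tendsto)

theorem sub_le_of_strongConvexOn_of_ball (hf : StrongConvexOn s m f) (hm : 0 < m) {x y : E}
    (hx : x ∈ s) (hy : y ∈ s) {δ : ℝ} (hδ : 0 < δ)
    (hball : ∀ z ∈ Metric.ball x δ ∩ s, f x - 1 < f z) (hxy : δ ≤ ‖x - y‖) :
    f x - 4 / (m * δ ^ 2) ≤ f y := by
  set r := ‖x - y‖
  have hr : 0 < r := hδ.trans_le hxy
  set t := δ / (2 * r) with ht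
  have htr : t * r = δ / 2 := by rw [ht]; field_simp
  have ht0 : 0 < t := by positivity
  have ht_half : t ≤ 1 / 2 := by rw [ht, div_le_iff₀ (by positivity)]; linarith
  have ht1 : 0 ≤ 1 - t := by linarith
  have dist_eq : dist ((1 - t) • x + t • y) x = δ / 2 := by
    rw [dist_comm, dist_eq_norm,
      show x - ((1 - t) • x + t • y) = t • (x - y) by module, norm_smul, Real.norm_eq_abs,
      abs_of_pos ht0, htr]
  have lt_point := hball _ ⟨Metric.mem_ball.2 (dist_eq.trans_lt (half_lt_self hδ)),
    hf.1 hx hy ht1 ht0.le (sub_add_cancel 1 t)⟩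
  have point_le := hf.2 hx hy ht1 ht0.le (sub_add_cancel 1 t)
  simp only [smul_eq_mul] at point_le
  have scaled : t * (m / 4 * r ^ 2 - 2 * r / δ) ≤ t * (f y - f x) := by
    have slope_eq : t * (2 * r / δ) = 1 := by rw [ht]; field_simp
    have slack_nonneg : 0 ≤ (1 / 2 - t) * (t * m / 2 * r ^ 2) :=
      mul_nonneg (sub_nonneg.2 ht_half) (by positivity)
    linarith
  have complete_square :
      m / 4 * (r - 4 / (m * δ)) ^ 2 = m / 4 * r ^ 2 - 2 * r / δ + 4 / (m * δ ^ 2) := by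
    field_simp
    ring
  have square_nonneg : 0 ≤ m / 4 * (r - 4 / (m * δ)) ^ 2 := by positivity
  linarith [le_of_mul_le_mul_left scaled ht0]

theorem bddBelow_image_of_strongConvexOn (hf : StrongConvexOn s m f) (hm : 0 < m)
    (hlsc : LowerSemicontinuousOn f s) : BddBelow (f '' s) := by
  obtain rfl | ⟨x, hx⟩ := s.eq_empty_or_nonempty
  · simp only [image_empty, bddBelow_empty]
  have near_x : ∀ᶠ y in 𝓝[s] x, f x - 1 < f y := hlsc x hx _ (sub_one_lt (f x))
  obtain ⟨δ, hδ, hball⟩ := Metric.mem_nhdsWithin_iff.1 near_x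
  refine ⟨min (f x - 1) (f x - 4 / (m * δ ^ 2)), ?_⟩
  rintro _ ⟨y, hy, rfl⟩
  rcases lt_or_ge ‖x - y‖ δ with hnear | hfar
  · exact (min_le_left _ _).trans (hball ⟨by rwa [mem_ball_iff_norm'], hy⟩).le
  · exact (min_le_right _ _).trans <| sub_le_of_strongConvexOn_of_ball hf hm hx hy hδ
      (fun _ hz => hball hz) hfar

theorem exists_isMinOn_of_strongConvexOn (hs : IsComplete s) (hne : s.Nonempty)
    (hf : StrongConvexOn s m f) (hm : 0 < m) (hlsc : LowerSemicontinuousOn f s) :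
    ∃ x ∈ s, IsMinOn f s x := by
  have hbdd := bddBelow_image_of_strongConvexOn hf hm hlsc
  have hlower : sInf (f '' s) ∈ lowerBounds (f '' s) := fun _ => csInf_le hbdd
  obtain ⟨v, -, hv, hvs⟩ := exists_seq_tendsto_sInf (hne.image f) hbdd
  choose u hus huv using hvs
  obtain rfl : (fun n => f (u n)) = v := funext huv
  obtain ⟨x, hx, hux⟩ :=
    cauchySeq_tendsto_of_isComplete hs hus (cauchySeq_of_strongConvexOn hf hm hlower hus hv)
  have hux' : Tendsto u atTop (𝓝[s] x) := tendsto_nhdsWithin_iff.2 ⟨hux, .of_forall hus⟩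
  have hle : f x ≤ sInf (f '' s) := le_of_forall_lt fun c hc => by
    obtain ⟨c', hcc', hc'⟩ := exists_between hc
    exact hcc'.trans_le <|
      ge_of_tendsto hv ((hux'.eventually (hlsc x hx c' hc')).mono fun _ => le_of_lt)
  exact ⟨x, hx, fun y hy => hle.trans (hlower (mem_image_of_mem f hy))⟩

theorem existsUnique_isMinOn_of_strongConvexOn (hs : IsComplete s) (hne : s.Nonempty)
    (hf : StrongConvexOn s m f) (hm : 0 < m) (hlsc : LowerSemicontinuousOn f s) :
    ∃! x, x ∈ s ∧ IsMinOn f s x := by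
  obtain ⟨x, hx, hmin⟩ := exists_isMinOn_of_strongConvexOn hs hne hf hm hlsc
  exact ⟨x, ⟨hx, hmin⟩, fun y ⟨hy, hmin'⟩ =>
    (hf.strictConvexOn hm).eq_of_isMinOn hmin' hmin hy hx⟩

end StrongConvexity

section Regularization

variable {H : Type*} [NormedAddCommGroup H] [InnerProductSpace ℝ H] {R : H → ℝ}

theorem strongConvexOn_add_mul_sq_norm {s : Set H} (hR : ConvexOn ℝ s R) (l : ℝ) :
    StrongConvexOn s (2 * l) fun f => R f + l * ‖f‖ ^ 2 := by
  rw [strongConvexOn_iff_convex]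
  simpa only [mul_div_cancel_left₀ l (two_ne_zero' ℝ), add_sub_cancel_right] using hR

theorem existsUnique_forall_add_mul_sq_norm_le [CompleteSpace H] (hR : ConvexOn ℝ univ R)
    (hlsc : LowerSemicontinuous R) {l : ℝ} (hl : 0 < l) :
    ∃! f : H, ∀ g : H, R f + l * ‖f‖ ^ 2 ≤ R g + l * ‖g‖ ^ 2 := by
  have hlsc' : LowerSemicontinuous fun f => R f + l * ‖f‖ ^ 2 :=
    hlsc.add (by fun_prop : Continuous fun f : H => l * ‖f‖ ^ 2).lowerSemicontinuous
  simpa only [mem_univ, true_and, isMinOn_univ_iff] using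
    existsUnique_isMinOn_of_strongConvexOn isComplete_univ univ_nonempty
      (strongConvexOn_add_mul_sq_norm hR l) (by positivity) (hlsc'.lowerSemicontinuousOn univ)

end Regularization

theorem lipschitzWith_integral {α E G : Type*} [MeasurableSpace α] {μ : Measure α}
    [PseudoMetricSpace E] [NormedAddCommGroup G] [NormedSpace ℝ G] {F : E → α → G} {K : α → ℝ}
    (hF : ∀ x, Integrable (F x) μ) (hK : Integrable K μ)
    (hLip : ∀ x y, ∀ᵐ a ∂μ, dist (F x a) (F y a) ≤ K a * dist x y) :
    LipschitzWith (∫ a, K a ∂μ).toNNReal fun x => ∫ a, F x a ∂μ := by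
  refine LipschitzWith.of_dist_le' fun x y => ?_
  calc dist (∫ a, F x a ∂μ) (∫ a, F y a ∂μ) = ‖∫ a, (F x a - F y a) ∂μ‖ := by
        rw [dist_eq_norm, integral_sub (hF x) (hF y)]
    _ ≤ ∫ a, K a * dist x y ∂μ :=
        norm_integral_le_of_norm_le (hK.mul_const _) <| by
          simpa only [dist_eq_norm (F x _)] using hLip x y
    _ = (∫ a, K a ∂μ) * dist x y := integral_mul_const _ _

theorem integrable_fst_add_snd {α G : Type*} [MeasurableSpace α] {μ : Measure α}
    [IsFiniteMeasure μ] [NormedAddCommGroup G] {g : α → G} (hg : Integrable g μ) :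
    Integrable (fun z : α × α => g z.1 + g z.2) (μ.prod μ) :=
  (hg.comp_fst μ).add (hg.comp_snd μ)

section ShiftedLoss

variable {X Y H : Type*} [NormedAddCommGroup H] [InnerProductSpace ℝ H]

/-- Separate Lipschitz continuity of the pairwise loss `L` with constant `L₁`, written `|L|₁` in
the paper: the real arguments are measured in the `ℓ¹` distance, uniformly in the observations. -/
def SeparatelyLipschitz (L : X → Y → X → Y → ℝ → ℝ → ℝ) (L₁ : ℝ) : Prop :=
  ∀ x y x' y' t₁ t₂ s₁ s₂,
    |L x y x' y' t₁ t₂ - L x y x' y' s₁ s₂| ≤ L₁ * (|t₁ - s₁| + |t₂ - s₂|)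

/-- The shifted loss `L★(x, y, x̃, ỹ, f(x), f(x̃))` of `f ∈ H` at the pair of observations
`z = ((x, y), (x̃, ỹ))`, with `f(x)` encoded as `⟪f, Φ x⟫`; `shiftedRisk` is its integral. -/
def shiftedLoss (L : X → Y → X → Y → ℝ → ℝ → ℝ) (Φ : X → H) (f : H)
    (z : (X × Y) × (X × Y)) : ℝ :=
  L z.1.1 z.1.2 z.2.1 z.2.2 ⟪f, Φ z.1.1⟫ ⟪f, Φ z.2.1⟫ - L z.1.1 z.1.2 z.2.1 z.2.2 0 0

variable {L : X → Y → X → Y → ℝ → ℝ → ℝ} {Φ : X → H} {L₁ : ℝ} {κ : X → ℝ}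

theorem shiftedLoss_zero (z : (X × Y) × (X × Y)) : shiftedLoss L Φ 0 z = 0 := by
  simp only [shiftedLoss, inner_zero_left, sub_self]

theorem convexOn_shiftedLoss {z : (X × Y) × (X × Y)}
    (hL : ConvexOn ℝ univ fun t : ℝ × ℝ => L z.1.1 z.1.2 z.2.1 z.2.2 t.1 t.2) :
    ConvexOn ℝ univ fun f => shiftedLoss L Φ f z := by
  let evalPair : H →ₗ[ℝ] ℝ × ℝ :=
    ((innerₗ H).flip (Φ z.1.1)).prod ((innerₗ H).flip (Φ z.2.1))
  exact (hL.comp_linearMap evalPair).add_const (-L z.1.1 z.1.2 z.2.1 z.2.2 0 0)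

theorem dist_shiftedLoss_le (hL : SeparatelyLipschitz L L₁) (hL₁ : 0 ≤ L₁)
    (hκ : ∀ x, ‖Φ x‖ ≤ κ x) (f g : H) (z : (X × Y) × (X × Y)) :
    dist (shiftedLoss L Φ f z) (shiftedLoss L Φ g z)
      ≤ L₁ * (κ z.1.1 + κ z.2.1) * dist f g := by
  have eval_sub_le (x : X) : |⟪f, Φ x⟫ - ⟪g, Φ x⟫| ≤ κ x * dist f g := by
    rw [← inner_sub_left, dist_eq_norm, mul_comm]
    exact (abs_real_inner_le_norm _ _).trans (by gcongr; exact hκ x)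
  calc dist (shiftedLoss L Φ f z) (shiftedLoss L Φ g z)
      ≤ L₁ * (|⟪f, Φ z.1.1⟫ - ⟪g, Φ z.1.1⟫| + |⟪f, Φ z.2.1⟫ - ⟪g, Φ z.2.1⟫|) := by
        rw [Real.dist_eq, shiftedLoss, shiftedLoss, sub_sub_sub_cancel_right]
        exact hL _ _ _ _ _ _ _ _
    _ ≤ L₁ * (κ z.1.1 * dist f g + κ z.2.1 * dist f g) := by
        gcongr <;> exact eval_sub_le _
    _ = L₁ * (κ z.1.1 + κ z.2.1) * dist f g := by ring

variable [MeasurableSpace X] [MeasurableSpace Y]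

theorem measurable_shiftedLoss
    (hL : Measurable fun p : (X × Y) × (X × Y) × ℝ × ℝ =>
      L p.1.1 p.1.2 p.2.1.1 p.2.1.2 p.2.2.1 p.2.2.2)
    {f : H} (hf : Measurable fun x => ⟪f, Φ x⟫) : Measurable (shiftedLoss L Φ f) := by
  have measurable_comp {a b : (X × Y) × (X × Y) → ℝ} (ha : Measurable a) (hb : Measurable b) :
      Measurable fun z => L z.1.1 z.1.2 z.2.1 z.2.2 (a z) (b z) :=
    hL.comp (measurable_fst.prodMk (measurable_snd.prodMk (ha.prodMk hb)))
  exact (measurable_comp (hf.comp measurable_fst.fst) (hf.comp measurable_snd.fst)).sub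
    (measurable_comp measurable_const measurable_const)

theorem integrable_shiftedLoss {P : Measure (X × Y)} [IsFiniteMeasure P]
    (hL_meas : Measurable fun p : (X × Y) × (X × Y) × ℝ × ℝ =>
      L p.1.1 p.1.2 p.2.1.1 p.2.1.2 p.2.2.1 p.2.2.2)
    (hL : SeparatelyLipschitz L L₁) (hL₁ : 0 ≤ L₁) (hκ : ∀ x, ‖Φ x‖ ≤ κ x)
    (hκ_int : Integrable (fun z => κ z.1) P) {f : H} (hf : Measurable fun x => ⟪f, Φ x⟫) :
    Integrable (shiftedLoss L Φ f) (P.prod P) := by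
  refine (((integrable_fst_add_snd hκ_int).const_mul L₁).mul_const ‖f‖).mono'
    (measurable_shiftedLoss hL_meas hf).aestronglyMeasurable (.of_forall fun z => ?_)
  simpa only [shiftedLoss_zero, dist_zero_right] using dist_shiftedLoss_le hL hL₁ hκ f 0 z

end ShiftedLoss

section ShiftedRisk

variable {X H : Type*} [MeasurableSpace X] {Y : Set ℝ} [NormedAddCommGroup H]
  [InnerProductSpace ℝ H] {L : X → Y → X → Y → ℝ → ℝ → ℝ} {Φ : X → H} {P : Measure (X × Y)}

theorem convexOn_shiftedRisk
    (hL : ∀ x y x' y', ConvexOn ℝ univ fun t : ℝ × ℝ => L x y x' y' t.1 t.2)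
    (hint : ∀ f, Integrable (shiftedLoss L Φ f) (P.prod P)) :
    ConvexOn ℝ univ (shiftedRisk L Φ P) :=
  integral_convexOn_of_integrand_ae convex_univ
    (.of_forall fun _ => convexOn_shiftedLoss (hL _ _ _ _)) fun f _ => hint f

theorem continuous_shiftedRisk [IsFiniteMeasure P] {L₁ : ℝ} {κ : X → ℝ}
    (hL : SeparatelyLipschitz L L₁) (hL₁ : 0 ≤ L₁) (hκ : ∀ x, ‖Φ x‖ ≤ κ x)
    (hκ_int : Integrable (fun z => κ z.1) P)
    (hint : ∀ f, Integrable (shiftedLoss L Φ f) (P.prod P)) :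
    Continuous (shiftedRisk L Φ P) :=
  (lipschitzWith_integral hint ((integrable_fst_add_snd hκ_int).const_mul L₁) fun f g =>
    .of_forall (dist_shiftedLoss_le hL hL₁ hκ f g)).continuous

end ShiftedRisk

theorem rpl_shifted_exists_unique_minimizer_general
    {X : Type*} [MeasurableSpace X] {Y : Set ℝ} (L : X → Y → X → Y → ℝ → ℝ → ℝ)
    (hL_meas : Measurable fun p : (X × Y) × (X × Y) × ℝ × ℝ =>
      L p.1.1 p.1.2 p.2.1.1 p.2.1.2 p.2.2.1 p.2.2.2)
    (hL_convex : ∀ x y x' y', ConvexOn ℝ univ fun t : ℝ × ℝ => L x y x' y' t.1 t.2)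
    (L₁ : ℝ) (hL₁ : 0 ≤ L₁) (hLip : SeparatelyLipschitz L L₁)
    {H : Type*} [NormedAddCommGroup H] [InnerProductSpace ℝ H] [CompleteSpace H]
    (Φ : X → H) (hΦ_meas : ∀ f : H, Measurable fun x => ⟪f, Φ x⟫)
    (P : Measure (X × Y)) [IsFiniteMeasure P]
    (κ : X → ℝ) (hκ : ∀ x, ‖Φ x‖ ≤ κ x) (hκ_int : Integrable (fun z => κ z.1) P)
    (l : ℝ) (hl : 0 < l) :
    ∃! fmin : H, ∀ g : H,
      shiftedRisk L Φ P fmin + l * ‖fmin‖ ^ 2 ≤ shiftedRisk L Φ P g + l * ‖g‖ ^ 2 := by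
  have hint (f : H) : Integrable (shiftedLoss L Φ f) (P.prod P) :=
    integrable_shiftedLoss hL_meas hLip hL₁ hκ hκ_int (hΦ_meas f)
  have hconvex := convexOn_shiftedRisk hL_convex hint
  have hcont := continuous_shiftedRisk hLip hL₁ hκ hκ_int hint
  exact existsUnique_forall_add_mul_sq_norm_le hconvex hcont.lowerSemicontinuous hl

/-- **Existence and uniqueness for the shifted loss, without moment conditions.** If `L` is a
convex, separately Lipschitz continuous pairwise loss and `H` the RKHS of a bounded measurable
kernel, then for every probability measure `P` on `X × Y` and every `λ > 0` there is a unique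
minimizer of the regularized shifted risk `f ↦ R_{L★,P}(f) + λ‖f‖²_H` over `H`. -/
theorem rpl_shifted_exists_unique_minimizer
    {X : Type*} [MeasurableSpace X] {Y : Set ℝ} (hY : IsClosed Y)
    (L : X → Y → X → Y → ℝ → ℝ → ℝ)
    (hL_nonneg : ∀ x y x' y' t t', 0 ≤ L x y x' y' t t')
    (hL_meas : Measurable fun p : (X × Y) × (X × Y) × ℝ × ℝ =>
      L p.1.1 p.1.2 p.2.1.1 p.2.1.2 p.2.2.1 p.2.2.2)
    (hL_convex : ∀ x y x' y',
      ConvexOn ℝ Set.univ fun t : ℝ × ℝ => L x y x' y' t.1 t.2)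
    (L₁ : ℝ) (hL₁ : 0 ≤ L₁)
    (hLip : ∀ x y x' y' t₁ t₂ s₁ s₂,
      |L x y x' y' t₁ t₂ - L x y x' y' s₁ s₂| ≤ L₁ * (|t₁ - s₁| + |t₂ - s₂|))
    {H : Type*} [NormedAddCommGroup H] [InnerProductSpace ℝ H] [CompleteSpace H]
    (Φ : X → H) (κ : ℝ) (hκ : ∀ x, ‖Φ x‖ ≤ κ)
    (hΦmeas : ∀ f : H, Measurable fun x => ⟪f, Φ x⟫)
    (P : Measure (X × Y)) [IsProbabilityMeasure P]
    (l : ℝ) (hl : 0 < l) :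
    ∃! fmin : H, ∀ g : H,
      shiftedRisk L Φ P fmin + l * ‖fmin‖ ^ 2 ≤ shiftedRisk L Φ P g + l * ‖g‖ ^ 2 := by
  exact rpl_shifted_exists_unique_minimizer_general L hL_meas hL_convex L₁ hL₁ hLip Φ hΦmeas P
    (fun _ => κ) hκ (integrable_const κ) l hl
end

section
/- Let X be a complete separable metric space, Y ⊆ ℝ closed, k a continuous bounded kernel on X with RKHS H and feature map Φ, and let L be a pairwise loss function that is separately Lipschitz continuous, differentiable in its last two arguments with continuous partial derivatives D₅L, D₆L and second-order partial derivatives D_iD_jL (i,j ∈ {5,6}) uniformly bounded by constants c_{L,1}, c_{L,2}, and satisfies L(x,y,x,y,t,t) = 0. Let λ > 0, P a Borel probability measure on X×Y, and f_{L★,P,λ} ∈ H any minimizer of f ↦ R_{L★,P}(f) + λ‖f‖_H². Then, as an H-valued Bochner integral, f_{L★,P,λ} = −(1/(2λ)) · ∫ [ D₅L(x,y,x̃,ỹ,f_{L★,P,λ}(x),f_{L★,P,λ}(x̃))·Φ(x) + D₆L(x,y,x̃,ỹ,f_{L★,P,λ}(x),f_{L★,P,λ}(x̃))·Φ(x̃)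 ] dP²((x,y),(x̃,ỹ)). -/
/-!
By the chain rule the integrand of the shifted risk is differentiable in `f` with gradient
`D₅L · Φ(x) + D₆L · Φ(x̃)`, and the Lipschitz condition makes it Lipschitz in `f` with constant
`|L|₁ (‖Φ(x)‖ + ‖Φ(x̃)‖)`, an integrable function. Hence one may differentiate under the integral,
and a minimizer is a zero of the gradient of the regularized risk. The integrals make sense because
`D₅L` and `D₆L`, as pointwise limits of difference quotients of `L`, are measurable in the data.
-/

open MeasureTheory
open scoped RealInnerProductSpace

section Measurability

open scoped Topology

variable {α 𝕜 E F : Type*} [MeasurableSpace α] {μ : Measure α} [NontriviallyNormedField 𝕜]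
  [AddCommGroup E] [Module 𝕜 E] [NormedAddCommGroup F] [NormedSpace 𝕜 F]

theorem aestronglyMeasurable_of_hasLineDerivAt {f : α → E → F} {f' : α → F} {x v : α → E}
    (hf : ∀ t : 𝕜, AEStronglyMeasurable (fun a => f a (x a + t • v a)) μ)
    (hf' : ∀ᵐ a ∂μ, HasLineDerivAt 𝕜 (f a) (f' a) (x a) (v a)) :
    AEStronglyMeasurable f' μ := by
  have hf₀ : AEStronglyMeasurable (fun a => f a (x a)) μ := by simpa using hf 0
  exact aestronglyMeasurable_of_tendsto_ae (𝓝[≠] (0 : 𝕜))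
    (fun t => ((hf t).sub hf₀).const_smul t⁻¹) (hf'.mono fun _ ha => ha.tendsto_slope_zero)

end Measurability

section Gradient

open InnerProductSpace
open scoped Topology

variable {𝕜 H : Type*} [RCLike 𝕜] [NormedAddCommGroup H] [InnerProductSpace 𝕜 H]
  [NormedSpace ℝ H] [CompleteSpace H]

theorem hasGradientAt_integral_of_dominated_loc_of_lip {α : Type*} [MeasurableSpace α]
    {μ : Measure α} {F : H → α → 𝕜} {G : α → H} {bound : α → ℝ} {f : H} {s : Set H}
    (hs : s ∈ 𝓝 f) (hF_meas : ∀ g ∈ s, AEStronglyMeasurable (F g) μ)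
    (hF_int : Integrable (F f) μ) (hG_meas : AEStronglyMeasurable G μ)
    (hF_lip : ∀ᵐ a ∂μ, ∀ g ∈ s, ‖F g a - F f a‖ ≤ bound a * ‖g - f‖)
    (hbound : Integrable bound μ) (hF_grad : ∀ᵐ a ∂μ, HasGradientAt (F · a) (G a) f) :
    Integrable G μ ∧ HasGradientAt (fun g => ∫ a, F g a ∂μ) (∫ a, G a ∂μ) f := by
  obtain ⟨hG'_int, hderiv⟩ := hasFDerivAt_integral_of_dominated_loc_of_lip' hs hF_meas hF_int
    ((toDual 𝕜 H).continuous.comp_aestronglyMeasurable hG_meas) hF_lip hbound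
    (hF_grad.mono fun _ ha => ha.hasFDerivAt)
  have hG_int : Integrable G μ :=
    hG'_int.mono hG_meas (.of_forall fun a => ((toDual 𝕜 H).norm_map (G a)).ge)
  refine ⟨hG_int, ?_⟩
  have hdual : ∫ a, toDual 𝕜 H (G a) ∂μ = toDual 𝕜 H (∫ a, G a ∂μ) := by
    ext h
    rw [ContinuousLinearMap.integral_apply hG'_int, toDual_apply_apply, ← inner_conj_symm,
      ← integral_inner hG_int, ← integral_conj]
    simp only [toDual_apply_apply, inner_conj_symm]
  rw [hasGradientAt_iff_hasFDerivAt, ← hdual]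
  exact hderiv

end Gradient

section PairwiseLoss

variable {H : Type*} [NormedAddCommGroup H] [InnerProductSpace ℝ H]

theorem abs_comp_inner_sub_le {ℓ : ℝ × ℝ → ℝ} {C : ℝ} (hC : 0 ≤ C)
    (hℓ : ∀ p q, |ℓ p - ℓ q| ≤ C * (|p.1 - q.1| + |p.2 - q.2|)) (u v f g : H) :
    |ℓ (⟪f, u⟫, ⟪f, v⟫) - ℓ (⟪g, u⟫, ⟪g, v⟫)| ≤ C * (‖u‖ + ‖v‖) * ‖f - g‖ := by
  have hinner (w : H) : |⟪f, w⟫ - ⟪g, w⟫| ≤ ‖w‖ * ‖f - g‖ := by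
    rw [← inner_sub_left, mul_comm]
    exact abs_real_inner_le_norm _ _
  calc |ℓ (⟪f, u⟫, ⟪f, v⟫) - ℓ (⟪g, u⟫, ⟪g, v⟫)|
      ≤ C * (|⟪f, u⟫ - ⟪g, u⟫| + |⟪f, v⟫ - ⟪g, v⟫|) := hℓ _ _
    _ ≤ C * (‖u‖ * ‖f - g‖ + ‖v‖ * ‖f - g‖) := by gcongr <;> exact hinner _
    _ = C * (‖u‖ + ‖v‖) * ‖f - g‖ := by ring

variable [CompleteSpace H]

theorem hasGradientAt_comp_inner {ℓ : ℝ × ℝ → ℝ} {b c : ℝ} {u v f : H}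
    (hℓ : HasFDerivAt ℓ (b • ContinuousLinearMap.fst ℝ ℝ ℝ + c • ContinuousLinearMap.snd ℝ ℝ ℝ)
      (⟪f, u⟫, ⟪f, v⟫)) :
    HasGradientAt (fun g : H => ℓ (⟪g, u⟫, ⟪g, v⟫)) (b • u + c • v) f := by
  have hinner (w : H) : HasFDerivAt (fun g : H => ⟪g, w⟫) (innerSL ℝ w) f :=
    (innerSL ℝ w).hasFDerivAt.congr_of_eventuallyEq (.of_forall fun g => real_inner_comm w g)
  rw [hasGradientAt_iff_hasFDerivAt]
  refine (hℓ.comp f ((hinner u).prodMk (hinner v))).congr_fderiv ?_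
  ext h
  simp

theorem hasGradientAt_integral_shifted_comp_inner {α : Type*} [MeasurableSpace α]
    {μ : Measure α} {ℓ : α → ℝ × ℝ → ℝ} {C : ℝ} {φ ψ : α → H} {b c : α → ℝ} {f : H}
    (hℓ_meas : Measurable (Function.uncurry ℓ)) (hC : 0 ≤ C)
    (hℓ_lip : ∀ a p q, |ℓ a p - ℓ a q| ≤ C * (|p.1 - q.1| + |p.2 - q.2|))
    (hφ : Integrable φ μ) (hψ : Integrable ψ μ)
    (hℓ_deriv : ∀ a, HasFDerivAt (ℓ a)
      (b a • ContinuousLinearMap.fst ℝ ℝ ℝ + c a • ContinuousLinearMap.snd ℝ ℝ ℝ)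
      (⟪f, φ a⟫, ⟪f, ψ a⟫)) :
    Integrable (fun a => b a • φ a + c a • ψ a) μ ∧
      HasGradientAt (fun g : H => ∫ a, (ℓ a (⟪g, φ a⟫, ⟪g, ψ a⟫) - ℓ a 0) ∂μ)
        (∫ a, (b a • φ a + c a • ψ a) ∂μ) f := by
  have hscore (g : H) : AEMeasurable (fun a => (⟪g, φ a⟫, ⟪g, ψ a⟫)) μ :=
    hφ.1.const_inner.aemeasurable.prodMk hψ.1.const_inner.aemeasurable
  have hloss {p : α → ℝ × ℝ} (hp : AEMeasurable p μ) :
      AEStronglyMeasurable (fun a => ℓ a (p a)) μ :=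
    (hℓ_meas.comp_aemeasurable (aemeasurable_id.prodMk hp)).aestronglyMeasurable
  have hF_meas (g : H) :
      AEStronglyMeasurable (fun a => ℓ a (⟪g, φ a⟫, ⟪g, ψ a⟫) - ℓ a 0) μ :=
    (hloss (hscore g)).sub (hloss aemeasurable_const)
  have hdir (v : ℝ × ℝ) : AEStronglyMeasurable (fun a => b a * v.1 + c a * v.2) μ :=
    aestronglyMeasurable_of_hasLineDerivAt (𝕜 := ℝ) (fun t => hloss ((hscore f).add_const (t • v)))
      (.of_forall fun a => by simpa using (hℓ_deriv a).hasLineDerivAt v)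
  have hb : AEStronglyMeasurable b μ := by simpa using hdir (1, 0)
  have hc : AEStronglyMeasurable c μ := by simpa using hdir (0, 1)
  have hbound : Integrable (fun a => C * (‖φ a‖ + ‖ψ a‖)) μ := (hφ.norm.add hψ.norm).const_mul C
  have hF_int : Integrable (fun a => ℓ a (⟪f, φ a⟫, ⟪f, ψ a⟫) - ℓ a 0) μ := by
    refine (hbound.mul_const ‖f‖).mono' (hF_meas f) (.of_forall fun a => ?_)
    simpa [Prod.zero_eq_mk] using abs_comp_inner_sub_le hC (hℓ_lip a) (φ a) (ψ a) f 0
  refine hasGradientAt_integral_of_dominated_loc_of_lip Filter.univ_mem (fun g _ => hF_meas g)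
    hF_int ((hb.smul hφ.1).add (hc.smul hψ.1)) (.of_forall fun a g _ => ?_) hbound
    (.of_forall fun a => ?_)
  · rw [sub_sub_sub_cancel_right]
    exact abs_comp_inner_sub_le hC (hℓ_lip a) (φ a) (ψ a) g f
  · exact (hasGradientAt_comp_inner (hℓ_deriv a)).hasFDerivAt.sub_const (ℓ a 0)

theorem eq_neg_smul_gradient_of_isLocalMin_add_norm_sq {R : H → ℝ} {G f : H} {l : ℝ} (hl : l ≠ 0)
    (hR : HasGradientAt R G f) (hf : IsLocalMin (fun g => R g + l * ‖g‖ ^ 2) f) :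
    f = (-(1 / (2 * l))) • G := by
  have hstationary := hf.hasFDerivAt_eq_zero
    (hR.hasFDerivAt.add ((hasStrictFDerivAt_norm_sq f).hasFDerivAt.const_mul l))
  have hdir (h : H) : ⟪G, h⟫ + l * (2 * ⟪f, h⟫) = 0 := by
    simpa using DFunLike.congr_fun hstationary h
  have hgrad : G + (2 * l) • f = 0 := by
    refine ext_inner_right ℝ fun h => ?_
    rw [inner_add_left, real_inner_smul_left, inner_zero_left]
    linarith [hdir h]
  rw [eq_neg_of_add_eq_zero_left hgrad, smul_neg, neg_smul, neg_neg, smul_smul,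
    one_div_mul_cancel (by positivity), one_smul]

theorem rpl_representer_theorem_general {X : Type*} [MeasurableSpace X] {Y : Set ℝ}
    (L D₅L D₆L : X → Y → X → Y → ℝ → ℝ → ℝ)
    (hL_meas : Measurable fun p : (X × Y) × (X × Y) × ℝ × ℝ =>
      L p.1.1 p.1.2 p.2.1.1 p.2.1.2 p.2.2.1 p.2.2.2)
    (L₁ : ℝ) (hL₁ : 0 ≤ L₁)
    (hLip : ∀ x y x' y' t₁ t₂ s₁ s₂,
      |L x y x' y' t₁ t₂ - L x y x' y' s₁ s₂| ≤ L₁ * (|t₁ - s₁| + |t₂ - s₂|))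
    (hderiv : ∀ x y x' y' t t', HasFDerivAt (fun p : ℝ × ℝ => L x y x' y' p.1 p.2)
      ((D₅L x y x' y' t t') • ContinuousLinearMap.fst ℝ ℝ ℝ
        + (D₆L x y x' y' t t') • ContinuousLinearMap.snd ℝ ℝ ℝ) (t, t'))
    (P : Measure (X × Y)) [IsFiniteMeasure P]
    (Φ : X → H) (hΦ : Integrable (fun z : X × Y => Φ z.1) P)
    (l : ℝ) (hl : l ≠ 0) (fmin : H)
    (hfmin : IsLocalMin (fun g : H => shiftedRisk L Φ P g + l * ‖g‖ ^ 2) fmin) :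
    Integrable (fun z : (X × Y) × (X × Y) =>
      (D₅L z.1.1 z.1.2 z.2.1 z.2.2 ⟪fmin, Φ z.1.1⟫ ⟪fmin, Φ z.2.1⟫) • Φ z.1.1
        + (D₆L z.1.1 z.1.2 z.2.1 z.2.2 ⟪fmin, Φ z.1.1⟫ ⟪fmin, Φ z.2.1⟫) • Φ z.2.1) (P.prod P) ∧
    fmin = (-(1 / (2 * l))) • ∫ z : (X × Y) × (X × Y),
      ((D₅L z.1.1 z.1.2 z.2.1 z.2.2 ⟪fmin, Φ z.1.1⟫ ⟪fmin, Φ z.2.1⟫) • Φ z.1.1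
        + (D₆L z.1.1 z.1.2 z.2.1 z.2.2 ⟪fmin, Φ z.1.1⟫ ⟪fmin, Φ z.2.1⟫) • Φ z.2.1)
      ∂(P.prod P) := by
  have hℓ_meas : Measurable (Function.uncurry fun (z : (X × Y) × (X × Y)) (p : ℝ × ℝ) =>
      L z.1.1 z.1.2 z.2.1 z.2.2 p.1 p.2) :=
    hL_meas.comp MeasurableEquiv.prodAssoc.measurable
  obtain ⟨hG_int, hR⟩ := hasGradientAt_integral_shifted_comp_inner hℓ_meas hL₁
    (fun _ _ _ => hLip ..) (hΦ.comp_fst P) (hΦ.comp_snd P) (fun _ => hderiv ..)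
  exact ⟨hG_int, eq_neg_smul_gradient_of_isLocalMin_add_norm_sq hl hR hfmin⟩

end PairwiseLoss

/-- **Representer theorem for regularized pairwise learning.** Under Assumption 1 of the paper
(complete separable metric `X`, closed `Y ⊆ ℝ`, continuous bounded kernel with feature map `Φ`,
separately Lipschitz differentiable loss with continuous uniformly bounded first and second
partial derivatives in the last two arguments, and `L(x,y,x,y,t,t) = 0`), any minimizer
`fmin` of the regularized shifted risk satisfies
`fmin = -(1/(2λ)) ∫ [D₅L(…) Φ(x) + D₆L(…) Φ(x̃)] dP²` as an `H`-valued Bochner integral. -/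
theorem rpl_representer_theorem
    {X : Type*} [MeasurableSpace X] [MetricSpace X] [CompleteSpace X]
    [TopologicalSpace.SeparableSpace X] [BorelSpace X]
    {Y : Set ℝ} (hY : IsClosed Y)
    (L D₅L D₆L D₅₅L D₅₆L D₆₅L D₆₆L : X → Y → X → Y → ℝ → ℝ → ℝ)
    (hL_nonneg : ∀ x y x' y' t t', 0 ≤ L x y x' y' t t')
    (hL_meas : Measurable fun p : (X × Y) × (X × Y) × ℝ × ℝ =>
      L p.1.1 p.1.2 p.2.1.1 p.2.1.2 p.2.2.1 p.2.2.2)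
    (L₁ : ℝ) (hL₁ : 0 ≤ L₁)
    (hLip : ∀ x y x' y' t₁ t₂ s₁ s₂,
      |L x y x' y' t₁ t₂ - L x y x' y' s₁ s₂| ≤ L₁ * (|t₁ - s₁| + |t₂ - s₂|))
    (hderiv : ∀ x y x' y' t t', HasFDerivAt (fun p : ℝ × ℝ => L x y x' y' p.1 p.2)
      ((D₅L x y x' y' t t') • ContinuousLinearMap.fst ℝ ℝ ℝ
        + (D₆L x y x' y' t t') • ContinuousLinearMap.snd ℝ ℝ ℝ) (t, t'))
    (hderiv₅ : ∀ x y x' y' t t', HasFDerivAt (fun p : ℝ × ℝ => D₅L x y x' y' p.1 p.2)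
      ((D₅₅L x y x' y' t t') • ContinuousLinearMap.fst ℝ ℝ ℝ
        + (D₆₅L x y x' y' t t') • ContinuousLinearMap.snd ℝ ℝ ℝ) (t, t'))
    (hderiv₆ : ∀ x y x' y' t t', HasFDerivAt (fun p : ℝ × ℝ => D₆L x y x' y' p.1 p.2)
      ((D₅₆L x y x' y' t t') • ContinuousLinearMap.fst ℝ ℝ ℝ
        + (D₆₆L x y x' y' t t') • ContinuousLinearMap.snd ℝ ℝ ℝ) (t, t'))
    (hcont₁ : ∀ x y x' y', Continuous (fun p : ℝ × ℝ => D₅L x y x' y' p.1 p.2) ∧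
      Continuous (fun p : ℝ × ℝ => D₆L x y x' y' p.1 p.2))
    (hcont₂ : ∀ x y x' y', Continuous (fun p : ℝ × ℝ => D₅₅L x y x' y' p.1 p.2) ∧
      Continuous (fun p : ℝ × ℝ => D₅₆L x y x' y' p.1 p.2) ∧
      Continuous (fun p : ℝ × ℝ => D₆₅L x y x' y' p.1 p.2) ∧
      Continuous (fun p : ℝ × ℝ => D₆₆L x y x' y' p.1 p.2))
    (cL₁ cL₂ : ℝ) (hcL₁ : 0 < cL₁) (hcL₂ : 0 < cL₂)
    (hbd₁ : ∀ x y x' y' t t', |D₅L x y x' y' t t'| ≤ cL₁ ∧ |D₆L x y x' y' t t'| ≤ cL₁)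
    (hbd₂ : ∀ x y x' y' t t', |D₅₅L x y x' y' t t'| ≤ cL₂ ∧ |D₅₆L x y x' y' t t'| ≤ cL₂ ∧
      |D₆₅L x y x' y' t t'| ≤ cL₂ ∧ |D₆₆L x y x' y' t t'| ≤ cL₂)
    (hzero : ∀ (x : X) (y : Y) (t : ℝ), L x y x y t t = 0)
    {H : Type*} [NormedAddCommGroup H] [InnerProductSpace ℝ H] [CompleteSpace H]
    (Φ : X → H) (hΦcont : Continuous Φ) (κ : ℝ) (hκ : ∀ x, ‖Φ x‖ ≤ κ)
    (P : Measure (X × Y)) [IsProbabilityMeasure P]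
    (l : ℝ) (hl : 0 < l)
    (fmin : H)
    (hfmin : ∀ g : H, shiftedRisk L Φ P fmin + l * ‖fmin‖ ^ 2
      ≤ shiftedRisk L Φ P g + l * ‖g‖ ^ 2) :
    fmin = (-(1 / (2 * l))) • ∫ z : (X × Y) × (X × Y),
      ((D₅L z.1.1 z.1.2 z.2.1 z.2.2 ⟪fmin, Φ z.1.1⟫ ⟪fmin, Φ z.2.1⟫) • Φ z.1.1
        + (D₆L z.1.1 z.1.2 z.2.1 z.2.2 ⟪fmin, Φ z.1.1⟫ ⟪fmin, Φ z.2.1⟫) • Φ z.2.1)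
      ∂(P.prod P) :=
  (rpl_representer_theorem_general L D₅L D₆L hL_meas L₁ hL₁ hLip hderiv P Φ
    (.of_bound (hΦcont.stronglyMeasurable.comp_measurable measurable_fst).aestronglyMeasurable κ
      (.of_forall fun z => hκ z.1)) l hl.ne' fmin (.of_forall fun g => hfmin g)).2
end
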